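/- Let A be an open subset of ℂ⁴ and φ : A → ℂ holomorphic with ∑ᵢ₌₀³ ∂²φ/∂zᵢ² = 0 and ∑ᵢ₌₀³ (∂φ/∂zᵢ)² = 0 on A (a complex-harmonic morphism). Fix p = (p₀,p₁,p₂,p₃) ∈ ℂ⁴. Then: (a) the map χ, defined by χ(x₀,x₁,x₂,x₃) = φ(p₀+x₀, p₁+x₁, p₂+x₂, p₃+x₃) on the open set of real x where this is defined, satisfies ∑ᵢ₌₀³ ∂²χ/∂xᵢ² = 0 and ∑ᵢ₌₀³ (∂χ/∂xᵢ)² = 0; (b) the map ψ, defined by ψ(t,x₁,x₂,x₃) = φ(p₀ − it, p₁+x₁, p₂+x₂, p₃+x₃) on the open set of real (t,x₁,x₂,x₃) where this is defined, satisfies −∂_t²ψ + ∂₁²ψ + ∂₂²ψ + ∂₃²ψ = 0 and −(∂_tψ)² + (∂₁ψ)² + (∂₂ψ)² + (∂₃ψ)² = 0. -/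

import Mathlib

noncomputable section

/-- Real partial derivative in the `i`-th coordinate direction of a map `ℝ⁴ → ℂ`. -/
def pd (i : Fin 4) (f : (Fin 4 → ℝ) → ℂ) (x : Fin 4 → ℝ) : ℂ :=
  fderiv ℝ f x (Pi.single i 1)

/-- Complex partial derivative in the `i`-th coordinate direction of a map `ℂ⁴ → ℂ`. -/
def pdC (i : Fin 4) (f : (Fin 4 → ℂ) → ℂ) (z : Fin 4 → ℂ) : ℂ :=
  fderiv ℂ f z (Pi.single i 1)

/-- The parametrization of the `ℝ⁴`-slice through `p ∈ ℂ⁴`: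
`x ↦ (p₀+x₀, p₁+x₁, p₂+x₂, p₃+x₃)`. -/
def embR (p : Fin 4 → ℂ) (x : Fin 4 → ℝ) : Fin 4 → ℂ := fun i => p i + (x i : ℂ)

/-- The parametrization of the Minkowski slice through `p ∈ ℂ⁴`:
`(t,x₁,x₂,x₃) ↦ (p₀ − it, p₁+x₁, p₂+x₂, p₃+x₃)` (here `t` is the coordinate of index `0`). -/
def embM (p : Fin 4 → ℂ) (x : Fin 4 → ℝ) : Fin 4 → ℂ :=
  fun i => if i = 0 then p 0 - Complex.I * (x 0 : ℂ) else p i + (x i : ℂ)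

/-- Directional derivatives of holomorphic maps on open subsets of `ℂ⁴` are holomorphic. -/
theorem pdC_differentiableAt (A : Set (Fin 4 → ℂ)) (hA : IsOpen A)
    (φ : (Fin 4 → ℂ) → ℂ) (hφ : DifferentiableOn ℂ φ A) (i : Fin 4)
    (z₀ : Fin 4 → ℂ) (hz₀ : z₀ ∈ A) : DifferentiableAt ℂ (pdC i φ) z₀ := by
  have hc : ContinuousAt φ z₀ := (hφ.differentiableAt (hA.mem_nhds hz₀)).continuousAt
  obtain ⟨δ, hδ, hball⟩ : ∃ δ > 0, Metric.ball z₀ δ ⊆ A ∩ φ ⁻¹' Metric.ball (φ z₀) 1 :=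
    Metric.mem_nhds_iff.1 (Filter.inter_mem (hA.mem_nhds hz₀)
      (hc.preimage_mem_nhds (Metric.ball_mem_nhds _ one_pos)))
  obtain ⟨R, hR, hRδ⟩ : ∃ R : ℝ, 0 < R ∧ δ = 4 * R := ⟨δ / 4, by positivity, by ring⟩
  subst hRδ
  set v : Fin 4 → ℂ := Pi.single i 1 with hv
  have hvn : ‖v‖ = 1 := by rw [hv, Pi.norm_single, norm_one]
  have hin : ∀ z ∈ Metric.ball z₀ R, ∀ ζ : ℂ, ‖ζ‖ ≤ R → z + ζ • v ∈ Metric.ball z₀ (2 * R) := by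
    intro z hz ζ hζ
    rw [mem_ball_iff_norm] at hz ⊢
    calc ‖z + ζ • v - z₀‖ = ‖(z - z₀) + ζ • v‖ := by congr 1; abel
      _ ≤ ‖z - z₀‖ + ‖ζ • v‖ := norm_add_le _ _
      _ < 2 * R := by rw [norm_smul, hvn]; linarith
  have hdiff : ∀ w ∈ Metric.ball z₀ (4 * R), DifferentiableAt ℂ φ w := fun w hw =>
    hφ.differentiableAt (hA.mem_nhds (hball hw).1)
  have hsub : Metric.ball z₀ (2 * R) ⊆ Metric.ball z₀ (4 * R) :=
    Metric.ball_subset_ball (by linarith)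
  have hbound : ∀ w ∈ Metric.ball z₀ (2 * R), ‖fderiv ℂ φ w‖ ≤ 2 / (2 * R) := by
    intro w hw
    have hs : Metric.ball w (2 * R) ⊆ Metric.ball z₀ (4 * R) := by
      apply Metric.ball_subset_ball'
      have := Metric.mem_ball.1 hw
      linarith
    refine Complex.norm_fderiv_le_div_of_mapsTo_ball
      (fun y hy => (hdiff y (hs hy)).differentiableWithinAt) ?_ (by positivity)
    intro y hy
    have h1 := Metric.mem_ball.1 (hball (hs hy)).2
    have h2 := Metric.mem_ball.1 (hball (hsub hw)).2
    rw [dist_comm] at h2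
    have := dist_triangle (φ y) (φ z₀) (φ w)
    first
      | exact Metric.mem_ball.2 (by linarith)
      | exact Metric.mem_closedBall.2 (by linarith)
  have hcm : ∀ θ : ℝ, ‖circleMap 0 R θ‖ ≤ R := fun θ => by simp [abs_of_pos hR]
  have hcont : Continuous (circleMap (0 : ℂ) R) := continuous_circleMap 0 R
  let c : ℝ → ℂ := fun θ => circleMap 0 R θ * Complex.I * (1 / (circleMap 0 R θ - 0) ^ 2)
  have hccont : Continuous c := by
    refine (hcont.mul continuous_const).mul (continuous_const.div (by fun_prop) ?_)
    intro θ
    exact pow_ne_zero 2 (sub_ne_zero.2 (circleMap_ne_center hR.ne'))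
  let F : (Fin 4 → ℂ) → ℝ → ℂ := fun z θ => c θ • φ (z + circleMap 0 R θ • v)
  let F' : (Fin 4 → ℂ) → ℝ → ((Fin 4 → ℂ) →L[ℂ] ℂ) :=
    fun z θ => c θ • fderiv ℂ φ (z + circleMap 0 R θ • v)
  have hlin : ∀ z : Fin 4 → ℂ, Continuous fun θ : ℝ => z + circleMap 0 R θ • v := fun z =>
    continuous_const.add (hcont.smul continuous_const)
  have hFc : ∀ z ∈ Metric.ball z₀ R, Continuous (F z) := by
    intro z hz
    refine hccont.smul (continuous_iff_continuousAt.2 fun θ => ?_)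
    exact ContinuousAt.comp (f := fun θ : ℝ => z + circleMap 0 R θ • v) (g := φ)
      (hdiff _ (hsub (hin z hz _ (hcm θ)))).continuousAt (hlin z).continuousAt
  have key : HasFDerivAt (fun z => ∫ θ in (0 : ℝ)..2 * Real.pi, F z θ)
      (∫ θ in (0 : ℝ)..2 * Real.pi, F' z₀ θ) z₀ := by
    refine intervalIntegral.hasFDerivAt_integral_of_dominated_of_fderiv_le
      (bound := fun θ => ‖c θ‖ * (2 / (2 * R))) (Metric.ball_mem_nhds z₀ hR) ?_ ?_ ?_ ?_ ?_ ?_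
    · filter_upwards [Metric.ball_mem_nhds z₀ hR] with z hz
      exact (hFc z hz).aestronglyMeasurable
    · exact (hFc z₀ (Metric.mem_ball_self hR)).intervalIntegrable _ _
    · refine AEMeasurable.aestronglyMeasurable (Measurable.aemeasurable ?_)
      exact hccont.measurable.smul ((measurable_fderiv ℂ φ).comp (hlin z₀).measurable)
    · refine Filter.Eventually.of_forall fun θ _ z hz => ?_
      simp only [F', norm_smul]
      exact mul_le_mul_of_nonneg_left (hbound _ (hin z hz _ (hcm θ))) (norm_nonneg _)
    · exact (hccont.norm.mul continuous_const).intervalIntegrable _ _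
    · refine Filter.Eventually.of_forall fun θ _ z hz => ?_
      have h := (hdiff _ (hsub (hin z hz _ (hcm θ)))).hasFDerivAt
      exact ((hasFDerivAt_comp_add_right (circleMap 0 R θ • v)).2 h).const_smul (c θ)
  have heq : pdC i φ =ᶠ[nhds z₀] fun z => (2 * Real.pi * Complex.I : ℂ)⁻¹ •
      ∫ θ in (0 : ℝ)..2 * Real.pi, F z θ := by
    filter_upwards [Metric.ball_mem_nhds z₀ hR] with z hz
    have hl : ∀ ζ : ℂ, HasDerivAt (fun ζ : ℂ => z + ζ • v) v ζ := fun ζ => by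
      simpa using ((hasDerivAt_id ζ).smul_const v).const_add z
    have hd : ∀ ζ : ℂ, ‖ζ‖ ≤ R → HasDerivAt (fun ζ : ℂ => φ (z + ζ • v))
        (fderiv ℂ φ (z + ζ • v) v) ζ := fun ζ hζ =>
      (hdiff _ (hsub (hin z hz ζ hζ))).hasFDerivAt.comp_hasDerivAt ζ (hl ζ)
    have hC := DifferentiableOn.deriv_eq_smul_circleIntegral (f := fun ζ : ℂ => φ (z + ζ • v))
      (c := 0) hR (fun ζ hζ => (hd ζ (by simpa using hζ)).differentiableAt.differentiableWithinAt)
    rw [(hd 0 (by simpa using hR.le)).deriv] at hC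
    have hI : (∮ ζ in C(0, R), (1 / (ζ - 0) ^ 2) • φ (z + ζ • v))
        = ∫ θ in (0 : ℝ)..2 * Real.pi, F z θ := by
      simp only [circleIntegral, F, c, deriv_circleMap, smul_eq_mul, mul_assoc]
    rw [← hI, hC, smul_smul, inv_mul_cancel₀ Complex.two_pi_I_ne_zero]
    simp [pdC, hv]
  exact (key.differentiableAt.fun_const_smul _).congr_of_eventuallyEq heq

/-- First partial derivatives along a real affine slice. -/
theorem pd_comp_emb {φ : (Fin 4 → ℂ) → ℂ} {emb : (Fin 4 → ℝ) → Fin 4 → ℂ}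
    {L : (Fin 4 → ℝ) →L[ℝ] (Fin 4 → ℂ)} {x : Fin 4 → ℝ} {i : Fin 4} {c : ℂ}
    (hL : HasFDerivAt emb L x) (hLi : L (Pi.single i 1) = c • Pi.single i 1)
    (hφ : DifferentiableAt ℂ φ (emb x)) :
    pd i (φ ∘ emb) x = c * pdC i φ (emb x) := by
  have h := (hφ.hasFDerivAt.restrictScalars ℝ).comp x hL
  simp only [pd, pdC]
  rw [h.fderiv]
  simp only [ContinuousLinearMap.comp_apply, ContinuousLinearMap.coe_restrictScalars', hLi,
    map_smul, smul_eq_mul]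

/-- Second partial derivatives along a real affine slice. -/
theorem pd_pd_comp_emb {A : Set (Fin 4 → ℂ)} (hA : IsOpen A)
    {φ : (Fin 4 → ℂ) → ℂ} (hφ : DifferentiableOn ℂ φ A) {emb : (Fin 4 → ℝ) → Fin 4 → ℂ}
    {L : (Fin 4 → ℝ) →L[ℝ] (Fin 4 → ℂ)} {x : Fin 4 → ℝ} {i : Fin 4} {c : ℂ}
    (hL : ∀ x, HasFDerivAt emb L x) (hLi : L (Pi.single i 1) = c • Pi.single i 1)
    (hx : emb x ∈ A) :
    pd i (pd i (φ ∘ emb)) x = c ^ 2 * pdC i (pdC i φ) (emb x) := by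
  have hev : pd i (φ ∘ emb) =ᶠ[nhds x] fun y => c • ((pdC i φ) ∘ emb) y := by
    filter_upwards [(hL x).continuousAt.preimage_mem_nhds (hA.mem_nhds hx)] with y hy
    exact pd_comp_emb (hL y) hLi (hφ.differentiableAt (hA.mem_nhds hy))
  have hd := pdC_differentiableAt A hA φ hφ i _ hx
  have h1 := pd_comp_emb (hL x) hLi hd
  have hdr : DifferentiableAt ℝ ((pdC i φ) ∘ emb) x :=
    (hd.restrictScalars ℝ).comp x (hL x).differentiableAt
  have h2 : pd i (pd i (φ ∘ emb)) x = c * pd i ((pdC i φ) ∘ emb) x := by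
    conv_lhs => rw [pd, hev.fderiv_eq, fderiv_fun_const_smul hdr]
    simp [pd]
  rw [h2, h1]
  ring

/-- The diagonal real-linear map `x ↦ (cᵢ xᵢ)ᵢ`. -/
def diagL (c : Fin 4 → ℂ) : (Fin 4 → ℝ) →L[ℝ] (Fin 4 → ℂ) :=
  ContinuousLinearMap.pi fun i => (c i) • (Complex.ofRealCLM.comp (ContinuousLinearMap.proj i))

theorem diagL_single (c : Fin 4 → ℂ) (i : Fin 4) :
    diagL c (Pi.single i 1) = c i • Pi.single i 1 := by
  ext j
  by_cases h : j = i
  · subst h; simp [diagL]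
  · simp [diagL, h]

theorem embR_hasFDerivAt (p : Fin 4 → ℂ) (x : Fin 4 → ℝ) :
    HasFDerivAt (embR p) (diagL 1) x := by
  have : embR p = fun x => p + diagL 1 x := by
    ext x i; simp [embR, diagL]
  rw [this]
  exact (diagL 1).hasFDerivAt.const_add p

theorem embM_hasFDerivAt (p : Fin 4 → ℂ) (x : Fin 4 → ℝ) :
    HasFDerivAt (embM p) (diagL ![-Complex.I, 1, 1, 1]) x := by
  have : embM p = fun x => p + diagL ![-Complex.I, 1, 1, 1] x := by
    ext x i
    fin_cases i <;> simp [embM, diagL, sub_eq_add_neg]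
  rw [this]
  exact (diagL _).hasFDerivAt.const_add p

/-- Proposition 7.3(i): a complex-harmonic morphism on an open subset of `ℂ⁴` restricts to a
harmonic morphism on each `ℝ⁴`-slice and to a harmonic morphism on each Minkowski slice. -/
theorem complex_harmonic_morphism_restricts_to_slices
    (A : Set (Fin 4 → ℂ)) (hA : IsOpen A)
    (φ : (Fin 4 → ℂ) → ℂ) (hφ : DifferentiableOn ℂ φ A)
    (hlap : ∀ z ∈ A, ∑ i : Fin 4, pdC i (pdC i φ) z = 0)
    (hconf : ∀ z ∈ A, ∑ i : Fin 4, (pdC i φ z) ^ 2 = 0)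
    (p : Fin 4 → ℂ) :
    (∀ x : Fin 4 → ℝ, embR p x ∈ A →
      (∑ i : Fin 4, pd i (pd i (φ ∘ embR p)) x = 0) ∧
      (∑ i : Fin 4, (pd i (φ ∘ embR p) x) ^ 2 = 0)) ∧
    (∀ x : Fin 4 → ℝ, embM p x ∈ A →
      (-(pd 0 (pd 0 (φ ∘ embM p)) x) + pd 1 (pd 1 (φ ∘ embM p)) x
          + pd 2 (pd 2 (φ ∘ embM p)) x + pd 3 (pd 3 (φ ∘ embM p)) x = 0) ∧
      (-((pd 0 (φ ∘ embM p) x) ^ 2) + (pd 1 (φ ∘ embM p) x) ^ 2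
          + (pd 2 (φ ∘ embM p) x) ^ 2 + (pd 3 (φ ∘ embM p) x) ^ 2 = 0)) := by
  refine ⟨fun x hx => ?_, fun x hx => ?_⟩
  · have hd := hφ.differentiableAt (hA.mem_nhds hx)
    have h1 : ∀ i, pd i (φ ∘ embR p) x = pdC i φ (embR p x) := fun i => by
      simpa using pd_comp_emb (embR_hasFDerivAt p x) (diagL_single 1 i) hd
    have h2 : ∀ i, pd i (pd i (φ ∘ embR p)) x = pdC i (pdC i φ) (embR p x) := fun i => by
      simpa using pd_pd_comp_emb hA hφ (embR_hasFDerivAt p) (diagL_single 1 i) hx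
    simp only [h1, h2]
    exact ⟨hlap _ hx, hconf _ hx⟩
  · have hd := hφ.differentiableAt (hA.mem_nhds hx)
    have h1 := fun i => pd_comp_emb (embM_hasFDerivAt p x) (diagL_single _ i) hd
    have h2 := fun i => pd_pd_comp_emb hA hφ (embM_hasFDerivAt p) (diagL_single _ i) hx
    have hl := hlap _ hx
    have hc := hconf _ hx
    rw [Fin.sum_univ_four] at hl hc
    have hI := Complex.I_sq
    rw [h1, h1, h1, h1, h2, h2, h2, h2]
    simp only [Matrix.cons_val]
    constructor
    · linear_combination hl - pdC 0 (pdC 0 φ) (embM p x) * hI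
    · linear_combination hc - (pdC 0 φ (embM p x)) ^ 2 * hI

end
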